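/- Abstract Kreps–Yan theorem, existence direction (the 'only if' part of Theorem 6.1 via the exhaustion argument): Let C ⊆ L^p be a norm-closed convex cone with 0 ∈ C, such that −h ∈ C for every h ∈ L^p_+, and such that C ∩ L^p_+ = {0}. Then there exists g ∈ L^q with g > 0 ℙ-a.e., 𝔼[g] = 1, and ⟨h, g⟩ ≤ 0 for every h ∈ C. Equivalently, the measure ℚ defined by dℚ/dℙ = g is a probability measure equivalent to ℙ, with dℚ/dℙ ∈ L^q and 𝔼_ℚ[h] ≤ 0 for all h ∈ C. -/

import Mathlib

open MeasureTheory Filter Topology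
open scoped ENNReal NNReal

/-- A positive functional on `Lp` induces a measure. -/
lemma ky_measure {Ω : Type*} [MeasurableSpace Ω] (P : Measure Ω) [IsProbabilityMeasure P]
    (r : ℝ≥0∞) [Fact (1 ≤ r)] (hr : r ≠ ∞) (φ : Lp ℝ r P →L[ℝ] ℝ)
    (hφ : ∀ f : Lp ℝ r P, 0 ≤ f → 0 ≤ φ f) :
    ∃ ν : Measure Ω, ∀ s (hs : MeasurableSet s),
      ν s = ENNReal.ofReal (φ (indicatorConstLp r hs (measure_ne_top P s) 1)) := by
  have hnn : ∀ s (hs : MeasurableSet s),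
      0 ≤ φ (indicatorConstLp r hs (measure_ne_top P s) 1) := by
    intro s hs
    apply hφ
    rw [← Lp.coeFn_nonneg]
    filter_upwards [indicatorConstLp_coeFn (p := r) (hs := hs) (hμs := measure_ne_top P s)
      (c := (1:ℝ))] with x hx
    rw [hx]
    exact Set.indicator_nonneg (fun _ _ => zero_le_one) x
  refine ⟨Measure.ofMeasurable
    (fun s hs => ENNReal.ofReal (φ (indicatorConstLp r hs (measure_ne_top P s) 1))) ?_ ?_, ?_⟩
  · simp
  · intro f hf hd
    have hm : ∀ n : ℕ, MeasurableSet (⋃ i ∈ Finset.range n, f i) := fun n =>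
      Finset.measurableSet_biUnion _ fun i _ => hf i
    have hsum : ∀ n : ℕ, φ (indicatorConstLp r (hm n) (measure_ne_top P _) 1) =
        ∑ i ∈ Finset.range n, φ (indicatorConstLp r (hf i) (measure_ne_top P _) 1) := by
      intro n
      induction n with
      | zero => simp
      | succ n ih =>
        rw [Finset.sum_range_succ, ← ih, ← map_add, ← indicatorConstLp_disjoint_union]
        · congr 2
          rw [Finset.range_add_one, Finset.set_biUnion_insert, Set.union_comm]
        · rw [Set.disjoint_iUnion₂_left]
          intro i hi
          exact hd (by simpa using (Finset.mem_range.1 hi).ne)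
    have ht : Tendsto (fun n : ℕ => P (symmDiff (⋃ i ∈ Finset.range n, f i) (⋃ i, f i))) atTop (𝓝 0) := by
      have hE : ∀ n : ℕ, symmDiff (⋃ i ∈ Finset.range n, f i) (⋃ i, f i) =
          (⋃ i, f i) \ (⋃ i ∈ Finset.range n, f i) := by
        intro n
        rw [Set.symmDiff_def, Set.sdiff_eq_empty.2, Set.empty_union]
        exact Set.iUnion₂_subset fun i _ => Set.subset_iUnion f i
      simp_rw [hE]
      have h0 : ⋂ n : ℕ, ((⋃ i, f i) \ (⋃ i ∈ Finset.range n, f i)) = ∅ := by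
        ext x
        simp only [Set.mem_iInter, Set.mem_sdiff, Set.mem_iUnion, Finset.mem_range,
          Set.mem_empty_iff_false, iff_false, not_forall]
        by_cases hx : ∃ i, x ∈ f i
        · obtain ⟨i, hi⟩ := hx
          exact ⟨i + 1, fun h => h.2 ⟨i, Nat.lt_succ_self i, hi⟩⟩
        · exact ⟨0, fun h => hx h.1⟩
      rw [← measure_empty (μ := P), ← h0]
      apply tendsto_measure_iInter_atTop
      · exact fun n => ((MeasurableSet.iUnion hf).diff (hm n)).nullMeasurableSet
      · intro a b hab
        apply Set.sdiff_subset_sdiff_right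
        exact Set.biUnion_subset_biUnion_left (by
          intro i hi
          exact Finset.mem_range.2 (lt_of_lt_of_le (Finset.mem_range.1 hi) hab))
      · exact ⟨0, measure_ne_top P _⟩
    have h1 := (φ.continuous.tendsto _).comp (tendsto_indicatorConstLp_set (ht := hm)
      (hμt := fun n => measure_ne_top P _) (hs := MeasurableSet.iUnion hf)
      (hμs := measure_ne_top P _) (c := (1:ℝ)) hr ht)
    have h2 := (ENNReal.continuous_ofReal.tendsto _).comp h1
    refine tendsto_nhds_unique h2 ?_
    have h3 := ENNReal.tendsto_nat_tsum
      (fun i => ENNReal.ofReal (φ (indicatorConstLp r (hf i) (measure_ne_top P _) 1)))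
    refine h3.congr fun n => ?_
    simp only [Function.comp]
    rw [hsum, ENNReal.ofReal_sum_of_nonneg fun i _ => hnn _ (hf i)]
  · intro s hs
    rw [Measure.ofMeasurable_apply s hs]

/-- Riesz representation for positive functionals on `Lp`. -/
lemma ky_riesz {Ω : Type*} [MeasurableSpace Ω] (P : Measure Ω) [IsProbabilityMeasure P]
    (p q : ℝ) (hpq : p.HolderConjugate q)
    [Fact (1 ≤ ENNReal.ofReal p)] [Fact (1 ≤ ENNReal.ofReal q)]
    (φ : Lp ℝ (ENNReal.ofReal p) P →L[ℝ] ℝ)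
    (hφ : ∀ f : Lp ℝ (ENNReal.ofReal p) P, 0 ≤ f → 0 ≤ φ f) :
    ∃ g : Lp ℝ (ENNReal.ofReal q) P, 0 ≤ g ∧ ∀ f, φ f = ∫ ω, f ω * g ω ∂P := by
  obtain ⟨ν, hν⟩ := ky_measure P _ ENNReal.ofReal_ne_top φ hφ
  have hp0 : ENNReal.ofReal p ≠ 0 := (zero_lt_one.trans_le Fact.out).ne'
  have hac : ν ≪ P := by
    refine Measure.AbsolutelyContinuous.mk fun s hs h0 => ?_
    rw [hν s hs]
    have : indicatorConstLp (ENNReal.ofReal p) hs (measure_ne_top P s) (1:ℝ) = 0 := by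
      rw [← norm_eq_zero, norm_indicatorConstLp hp0 ENNReal.ofReal_ne_top]
      simp [measureReal_def, h0, hpq.pos.le, hpq.ne_zero]
    simp [this]
  have hfin : IsFiniteMeasure ν := ⟨by rw [hν _ MeasurableSet.univ]; exact ENNReal.ofReal_lt_top⟩
  have hnn : ∀ s (hs : MeasurableSet s),
      0 ≤ φ (indicatorConstLp _ hs (measure_ne_top P s) 1) := by
    intro s hs
    apply hφ
    rw [← Lp.coeFn_nonneg]
    filter_upwards [indicatorConstLp_coeFn (p := ENNReal.ofReal p) (hs := hs)
      (hμs := measure_ne_top P s) (c := (1:ℝ))] with x hx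
    rw [hx]
    exact Set.indicator_nonneg (fun _ _ => zero_le_one) x
  set G : Ω → ℝ≥0∞ := ν.rnDeriv P with hG
  have hGm : Measurable G := Measure.measurable_rnDeriv _ _
  have hwd : P.withDensity G = ν := Measure.withDensity_rnDeriv_eq _ _ hac
  have hmem : ∀ s : SimpleFunc Ω ℝ≥0, MemLp (fun ω => (s ω : ℝ)) (ENNReal.ofReal p) P := fun s =>
    (s.map ((↑) : ℝ≥0 → ℝ)).memLp_of_isFiniteMeasure _ _
  have hsimple : ∀ s : SimpleFunc Ω ℝ≥0,
      0 ≤ φ ((hmem s).toLp _) ∧ ∫⁻ ω, s ω ∂ν = ENNReal.ofReal (φ ((hmem s).toLp _)) := by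
    intro s
    refine ⟨hφ _ ?_, ?_⟩
    · rw [← Lp.coeFn_nonneg]
      filter_upwards [(hmem s).coeFn_toLp] with x hx
      rw [hx]; positivity
    induction s using SimpleFunc.induction with
    | const c hs =>
      rename_i s
      have h1 : (hmem (SimpleFunc.piecewise s hs (SimpleFunc.const _ c)
          (SimpleFunc.const _ 0))).toLp _
          = (c:ℝ) • indicatorConstLp _ hs (measure_ne_top P s) (1:ℝ) := by
        apply Lp.ext
        filter_upwards [(hmem (SimpleFunc.piecewise s hs (SimpleFunc.const _ c)
          (SimpleFunc.const _ 0))).coeFn_toLp, Lp.coeFn_smul (c:ℝ)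
            (indicatorConstLp (ENNReal.ofReal p) hs (measure_ne_top P s) (1:ℝ)),
            indicatorConstLp_coeFn (p := ENNReal.ofReal p) (hs := hs)
              (hμs := measure_ne_top P s) (c := (1:ℝ))] with x h1 h2 h3
        rw [h1, h2, Pi.smul_apply, h3]
        by_cases hx : x ∈ s <;> simp [hx]
      rw [h1, map_smul, smul_eq_mul, ENNReal.ofReal_mul (NNReal.coe_nonneg c), ← hν s hs]
      have h2 : ∀ ω, ((SimpleFunc.piecewise s hs (SimpleFunc.const _ c)
          (SimpleFunc.const _ 0) ω : ℝ≥0) : ℝ≥0∞) = s.indicator (fun _ => (c:ℝ≥0∞)) ω := by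
        intro x
        by_cases hx : x ∈ s <;> simp [hx]
      simp_rw [h2]
      rw [lintegral_indicator_const hs]
      simp
    | add hd hf hg =>
      rename_i f g
      have h1 : (hmem (f + g)).toLp _ = (hmem f).toLp _ + (hmem g).toLp _ := by
        rw [← MemLp.toLp_add]
        congr 1
      have hf0 : 0 ≤ φ ((hmem f).toLp _) := hφ _ (by
        rw [← Lp.coeFn_nonneg]
        filter_upwards [(hmem f).coeFn_toLp] with x hx
        rw [hx]; positivity)
      have hg0 : 0 ≤ φ ((hmem g).toLp _) := hφ _ (by
        rw [← Lp.coeFn_nonneg]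
        filter_upwards [(hmem g).coeFn_toLp] with x hx
        rw [hx]; positivity)
      rw [h1, map_add, ENNReal.ofReal_add hf0 hg0, ← hf, ← hg, ← lintegral_add_left]
      · simp
      · exact f.measurable.coe_nnreal_ennreal
  -- key estimate
  have hkey : ∀ n, ∫⁻ ω, (SimpleFunc.eapprox G n ω) ^ q ∂P ≤ (ENNReal.ofReal ‖φ‖) ^ q := by
    intro n
    set t : SimpleFunc Ω ℝ≥0 := (SimpleFunc.eapprox G n).map ENNReal.toNNReal with ht
    have htc : ∀ ω, (t ω : ℝ≥0∞) = SimpleFunc.eapprox G n ω := fun ω => by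
      simp [ht, ENNReal.coe_toNNReal (SimpleFunc.eapprox_lt_top G n ω).ne]
    have htG : ∀ ω, (t ω : ℝ≥0∞) ≤ G ω := fun ω => by
      rw [htc, ← SimpleFunc.iSup_eapprox_apply hGm ω]
      exact le_iSup (fun n => SimpleFunc.eapprox G n ω) n
    simp_rw [← htc]
    set u : SimpleFunc Ω ℝ≥0 := t.map (fun x => x ^ (q - 1)) with hu
    set a := ∫⁻ ω, (t ω : ℝ≥0∞) ^ q ∂P with ha
    have hq1 : 0 < q - 1 := by linarith [hpq.symm.lt]
    have hafin : a ≠ ∞ := by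
      have := (((t.map ((↑) : ℝ≥0 → ℝ)).memLp_of_isFiniteMeasure (ENNReal.ofReal q) P)).2
      rw [eLpNorm_lt_top_iff_lintegral_rpow_enorm_lt_top (zero_lt_one.trans_le Fact.out).ne'
        ENNReal.ofReal_ne_top, ENNReal.toReal_ofReal hpq.symm.pos.le] at this
      refine ne_of_lt (lt_of_eq_of_lt ?_ this)
      apply lintegral_congr
      intro ω
      simp only [SimpleFunc.map_apply]
      rw [Real.enorm_of_nonneg (by positivity), ENNReal.ofReal_coe_nnreal]
    have h1 : a ≤ ∫⁻ ω, u ω ∂ν := by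
      rw [← hwd, lintegral_withDensity_eq_lintegral_mul _ hGm u.measurable.coe_nnreal_ennreal]
      apply lintegral_mono
      intro ω
      simp only [hu, SimpleFunc.map_apply, Pi.mul_apply]
      rw [ENNReal.coe_rpow_of_nonneg _ hq1.le]
      calc (t ω : ℝ≥0∞) ^ q = (t ω : ℝ≥0∞) * (t ω : ℝ≥0∞) ^ (q - 1) := by
            conv_lhs => rw [show q = 1 + (q - 1) by ring]
            rw [ENNReal.rpow_add_of_nonneg _ _ zero_le_one hq1.le, ENNReal.rpow_one]
        _ ≤ _ := by gcongr; exact htG ω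
    have h2 : ∫⁻ ω, u ω ∂ν ≤ ENNReal.ofReal ‖φ‖ * a ^ (1 / p) := by
      rw [(hsimple u).2]
      have h3 : φ ((hmem u).toLp _) ≤ ‖φ‖ * ‖(hmem u).toLp _‖ :=
        (le_abs_self _).trans (φ.le_opNorm _)
      refine (ENNReal.ofReal_le_ofReal h3).trans ?_
      rw [ENNReal.ofReal_mul (norm_nonneg _), Lp.norm_toLp, ENNReal.ofReal_toReal (hmem u).2.ne]
      gcongr
      rw [eLpNorm_eq_lintegral_rpow_enorm_toReal hp0 ENNReal.ofReal_ne_top,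
        ENNReal.toReal_ofReal hpq.pos.le]
      refine ENNReal.rpow_le_rpow (lintegral_mono ?_) (one_div_nonneg.2 hpq.pos.le)
      intro ω
      simp only [hu, SimpleFunc.map_apply]
      rw [Real.enorm_of_nonneg (by positivity), ENNReal.ofReal_coe_nnreal,
        ENNReal.coe_rpow_of_nonneg _ hq1.le, ← ENNReal.rpow_mul, hpq.symm.sub_one_mul_conj]
    have h3 := h1.trans h2
    by_cases ha0 : a = 0
    · rw [ha0]; exact bot_le
    have h4 : a ^ (1 / q) ≤ ENNReal.ofReal ‖φ‖ := by
      have h5 : a = a ^ (1/q) * a ^ (1/p) := by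
        rw [← ENNReal.rpow_add _ _ ha0 hafin]
        have := hpq.inv_add_inv_eq_one
        rw [one_div, one_div, add_comm, this, ENNReal.rpow_one]
      have h6 : a ^ (1/p) ≠ 0 := by simp [ha0, hafin]
      have h7 : a ^ (1/p) ≠ ∞ := ENNReal.rpow_ne_top_of_nonneg (by have := hpq.pos; positivity) hafin
      rw [← ENNReal.mul_le_mul_iff_left h6 h7, ← h5]
      exact h3
    calc a = (a ^ (1/q)) ^ q := by
          rw [← ENNReal.rpow_mul, one_div_mul_cancel hpq.symm.ne_zero, ENNReal.rpow_one]
      _ ≤ _ := by gcongr; exact hpq.symm.pos.le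
  have hGq : ∫⁻ ω, (G ω) ^ q ∂P < ∞ := by
    have h1 : ∀ ω, (G ω) ^ q = ⨆ n, (SimpleFunc.eapprox G n ω) ^ q := by
      intro ω
      conv_lhs => rw [← SimpleFunc.iSup_eapprox_apply hGm ω]
      exact (ENNReal.orderIsoRpow q hpq.symm.pos).map_iSup _
    simp_rw [h1]
    rw [lintegral_iSup (fun n => (SimpleFunc.measurable _).pow_const q)]
    · exact (iSup_le hkey).trans_lt (ENNReal.rpow_lt_top_of_nonneg hpq.symm.pos.le ENNReal.ofReal_ne_top)
    · intro m n hmn ω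
      exact ENNReal.rpow_le_rpow (SimpleFunc.monotone_eapprox G hmn ω) hpq.symm.pos.le
  have hgm : MemLp (fun ω => (G ω).toReal) (ENNReal.ofReal q) P := by
    refine ⟨hGm.ennreal_toReal.aestronglyMeasurable, ?_⟩
    rw [eLpNorm_lt_top_iff_lintegral_rpow_enorm_lt_top (zero_lt_one.trans_le Fact.out).ne'
      ENNReal.ofReal_ne_top, ENNReal.toReal_ofReal hpq.symm.pos.le]
    refine (lintegral_mono fun ω => ?_).trans_lt hGq
    rw [Real.enorm_of_nonneg ENNReal.toReal_nonneg]
    gcongr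
    · exact hpq.symm.pos.le
    · exact ENNReal.ofReal_toReal_le
  refine ⟨hgm.toLp _, ?_, ?_⟩
  · rw [← Lp.coeFn_nonneg]
    filter_upwards [hgm.coeFn_toLp] with x hx
    rw [hx]; exact ENNReal.toReal_nonneg
  have := hpq.ennrealOfReal
  set ψ := (ContinuousLinearMap.mul ℝ ℝ).flip.lpPairing P (ENNReal.ofReal q) (ENNReal.ofReal p)
    (hgm.toLp _) with hψ
  have hψe : ∀ f, ψ f = ∫ ω, f ω * (hgm.toLp _ : Lp ℝ (ENNReal.ofReal q) P) ω ∂P := by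
    intro f
    rw [hψ, ContinuousLinearMap.lpPairing_eq_integral]
    simp [mul_comm]
  intro f
  rw [← hψe]
  have hne : ENNReal.ofReal p ≠ ∞ := ENNReal.ofReal_ne_top
  induction f using Lp.induction (hp_ne_top := hne) with
  | indicatorConst c hs hμs =>
    rename_i s
    rw [Lp.simpleFunc.coe_indicatorConst]
    have h1 : indicatorConstLp (ENNReal.ofReal p) hs hμs.ne c
        = c • indicatorConstLp _ hs (measure_ne_top P s) (1:ℝ) := by
      apply Lp.ext
      filter_upwards [Lp.coeFn_smul c
            (indicatorConstLp (ENNReal.ofReal p) hs (measure_ne_top P s) (1:ℝ)),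
            indicatorConstLp_coeFn (p := ENNReal.ofReal p) (hs := hs)
              (hμs := measure_ne_top P s) (c := (1:ℝ)),
            indicatorConstLp_coeFn (p := ENNReal.ofReal p) (hs := hs)
              (hμs := hμs.ne) (c := c)] with x h2 h3 h4
      rw [h2, Pi.smul_apply, h3, h4]
      by_cases hx : x ∈ s <;> simp [hx]
    rw [h1, map_smul, map_smul]
    congr 1
    rw [hψe]
    have h5 : φ (indicatorConstLp _ hs (measure_ne_top P s) (1:ℝ)) = (ν s).toReal := by
      rw [hν s hs, ENNReal.toReal_ofReal (hnn s hs)]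
    rw [h5, ← measureReal_def, ← Measure.setIntegral_toReal_rnDeriv hac, ← integral_indicator hs]
    apply integral_congr_ae
    filter_upwards [hgm.coeFn_toLp, indicatorConstLp_coeFn (p := ENNReal.ofReal p) (hs := hs)
              (hμs := measure_ne_top P s) (c := (1:ℝ))] with x h6 h7
    rw [h6, h7]
    by_cases hx : x ∈ s <;> simp [hx, hG]
  | add hf hg _ h1 h2 => rw [map_add, map_add, h1, h2]
  | isClosed => exact isClosed_eq φ.continuous ψ.continuous

/-- abstract Kreps–Yan theorem, existence direction.  Let
`C ⊆ L^p` be a norm-closed convex cone containing `0` and `−L^p_+`, with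
`C ∩ L^p_+ = {0}`.  Then there is `g ∈ L^q` with `g > 0` a.e., `𝔼[g] = 1` and
`⟨h,g⟩ ≤ 0` for all `h ∈ C`; i.e. `dℚ/dℙ := g` defines an equivalent
probability measure with `L^q`-density under which every `h ∈ C` has
nonpositive expectation. -/
theorem kreps_yan_existence
    {Ω : Type*} [MeasurableSpace Ω] (P : Measure Ω) [IsProbabilityMeasure P]
    (p q : ℝ) (hp : 1 < p) (hq : 1 ≤ q) (hpq : 1 / p + 1 / q = 1)
    [Fact (1 ≤ ENNReal.ofReal p)] [Fact (1 ≤ ENNReal.ofReal q)]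
    (C : Set (Lp ℝ (ENNReal.ofReal p) P))
    (hclosed : IsClosed C)
    (hzero : (0 : Lp ℝ (ENNReal.ofReal p) P) ∈ C)
    (hadd : ∀ x ∈ C, ∀ y ∈ C, x + y ∈ C)
    (hsmul : ∀ c : ℝ, 0 ≤ c → ∀ x ∈ C, c • x ∈ C)
    (hneg : ∀ h : Lp ℝ (ENNReal.ofReal p) P,
      (0 : Ω → ℝ) ≤ᵐ[P] (h : Ω → ℝ) → -h ∈ C)
    (hpos : ∀ h ∈ C, (0 : Ω → ℝ) ≤ᵐ[P] (h : Ω → ℝ) → h = 0) :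
    ∃ g : Lp ℝ (ENNReal.ofReal q) P,
      (∀ᵐ ω ∂P, 0 < (g : Ω → ℝ) ω) ∧
      (∫ ω, (g : Ω → ℝ) ω ∂P) = 1 ∧
      (∀ h ∈ C, (∫ ω, (h : Ω → ℝ) ω * (g : Ω → ℝ) ω ∂P) ≤ 0) := by
  have hc : p.HolderConjugate q := by
    rw [Real.holderConjugate_iff]
    exact ⟨hp, by simpa [one_div] using hpq⟩
  have := hc.ennrealOfReal
  set B := (ContinuousLinearMap.mul ℝ ℝ).lpPairing P (ENNReal.ofReal p) (ENNReal.ofReal q) with hB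
  have hBe : ∀ h g, B h g = ∫ ω, h ω * g ω ∂P := by
    intro h g
    rw [hB, ContinuousLinearMap.lpPairing_eq_integral]
    simp
  simp_rw [← hBe]
  set K : Set (Lp ℝ (ENNReal.ofReal q) P) := {g | 0 ≤ g ∧ ∀ h ∈ C, B h g ≤ 0} with hK
  -- separation
  have hsep : ∀ A (hA : MeasurableSet A), P A ≠ 0 →
      ∃ g ∈ K, 0 < B (indicatorConstLp _ hA (measure_ne_top P A) 1) g := by
    intro A hA hPA
    set x := indicatorConstLp (ENNReal.ofReal p) hA (measure_ne_top P A) (1:ℝ) with hx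
    have hx0 : (0 : Ω → ℝ) ≤ᵐ[P] x := by
      filter_upwards [indicatorConstLp_coeFn (p := ENNReal.ofReal p) (hs := hA)
        (hμs := measure_ne_top P A) (c := (1:ℝ))] with ω hω
      rw [hω]
      exact Set.indicator_nonneg (fun _ _ => zero_le_one) ω
    have hxC : x ∉ C := by
      intro hxC
      have h0 := hpos x hxC hx0
      rw [← norm_eq_zero, hx, norm_indicatorConstLp (zero_lt_one.trans_le Fact.out).ne'
        ENNReal.ofReal_ne_top] at h0
      have : 0 < P.real A := by
        rw [measureReal_def]; exact ENNReal.toReal_pos hPA (measure_ne_top _ _)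
      have : 0 < ‖(1:ℝ)‖ * P.real A ^ (1 / (ENNReal.ofReal p).toReal) := by
        rw [norm_one, one_mul]; positivity
      exact this.ne' h0
    have hconv : Convex ℝ C := fun a ha b hb s t hs ht _ =>
      hadd _ (hsmul s hs a ha) _ (hsmul t ht b hb)
    obtain ⟨φ, u, hφ, hu⟩ := geometric_hahn_banach_closed_point hconv hclosed hxC
    have hu0 : 0 < u := by simpa using hφ 0 hzero
    have hφC : ∀ h ∈ C, φ h ≤ 0 := by
      intro h hh
      by_contra! hlt
      have := hφ _ (hsmul (u / φ h) (by positivity) h hh)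
      rw [map_smul, smul_eq_mul, div_mul_cancel₀ _ hlt.ne'] at this
      exact lt_irrefl _ this
    obtain ⟨g, hg0, hg⟩ := ky_riesz P p q hc φ (fun f hf => by
      have := hφC _ (hneg f ((Lp.coeFn_nonneg f).2 hf))
      rw [map_neg] at this
      linarith)
    refine ⟨g, ⟨hg0, fun h hh => ?_⟩, ?_⟩
    · rw [hBe, ← hg]; exact hφC h hh
    · rw [hBe, ← hg]; exact hu0.trans hu
  -- exhaustion
  set S : Set ℝ≥0∞ := (fun g : Lp ℝ (ENNReal.ofReal q) P => P {ω | 0 < g ω}) '' K with hS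
  have hS0 : S.Nonempty := ⟨_, 0, ⟨le_rfl, fun h _ => by simp⟩, rfl⟩
  obtain ⟨u, -, hut, huS⟩ := exists_seq_tendsto_sSup hS0 (OrderTop.bddAbove S)
  choose g hgK hgu using huS
  set c : ℕ → ℝ := fun n => (1/2)^n / (1 + ‖g n‖) with hcdef
  have hcpos : ∀ n, 0 < c n := fun n => by positivity
  have hsum : Summable fun n => c n • g n := by
    refine Summable.of_norm_bounded (g := fun n => (1/2:ℝ)^n) (summable_geometric_of_lt_one (by norm_num) (by norm_num)) ?_
    intro n
    rw [norm_smul, Real.norm_of_nonneg (hcpos n).le, hcdef]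
    simp only
    rw [div_mul_eq_mul_div]
    apply div_le_of_le_mul₀ (by positivity) (by positivity)
    gcongr
    linarith
  have hterm : ∀ n, 0 ≤ c n • g n := fun n => by
    rw [← Lp.coeFn_nonneg]
    filter_upwards [Lp.coeFn_smul (c n) (g n), (Lp.coeFn_nonneg _).2 (hgK n).1] with ω h1 h2
    rw [h1]
    exact mul_nonneg (hcpos n).le h2
  set k := ∑' n, c n • g n with hk
  have hkK : k ∈ K := by
    refine ⟨tsum_nonneg hterm, fun h hh => ?_⟩
    rw [hk, (B h).map_tsum hsum]
    refine tsum_nonpos fun n => ?_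
    rw [map_smul]
    exact mul_nonpos_of_nonneg_of_nonpos (hcpos n).le ((hgK n).2 h hh)
  have hksup : sSup S ≤ P {ω | 0 < k ω} := by
    refine le_of_tendsto' hut fun n => ?_
    rw [← hgu]
    apply measure_mono_ae
    have hle : c n • g n ≤ k := hsum.le_tsum n fun j _ => hterm j
    filter_upwards [Lp.coeFn_smul (c n) (g n), (Lp.coeFn_le _ _).2 hle] with ω h1 h2 h3
    rw [h1] at h2
    exact lt_of_lt_of_le (mul_pos (hcpos n) h3) h2
  have hkm : MeasurableSet {ω | 0 < k ω} :=
    measurableSet_lt measurable_const (Lp.stronglyMeasurable k).measurable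
  have hkpos : ∀ᵐ ω ∂P, 0 < k ω := by
    rw [ae_iff]
    by_contra hne
    obtain ⟨g', hg'K, hg'⟩ := hsep {ω | 0 < k ω}ᶜ hkm.compl hne
    have hsK : k + g' ∈ K := ⟨add_nonneg hkK.1 hg'K.1, fun h hh => by
      rw [map_add]; exact add_nonpos (hkK.2 h hh) (hg'K.2 h hh)⟩
    have h1 : P {ω | 0 < (k + g' : Lp ℝ (ENNReal.ofReal q) P) ω} ≤ P {ω | 0 < k ω} :=
      (le_sSup (Set.mem_image_of_mem _ hsK)).trans hksup
    have h2 : {ω | 0 < k ω} ≤ᵐ[P] {ω | 0 < (k + g' : Lp ℝ (ENNReal.ofReal q) P) ω} := by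
      filter_upwards [Lp.coeFn_add k g', (Lp.coeFn_nonneg _).2 hg'K.1] with ω h3 h4 h5
      show 0 < (k + g' : Lp ℝ (ENNReal.ofReal q) P) ω
      rw [h3]
      exact add_pos_of_pos_of_nonneg h5 h4
    have h3 := ae_eq_of_ae_subset_of_measure_ge h2 h1 hkm.nullMeasurableSet (measure_ne_top _ _)
    rw [hBe] at hg'
    refine hg'.ne' ?_
    apply integral_eq_zero_of_ae
    filter_upwards [indicatorConstLp_coeFn (p := ENNReal.ofReal p) (hs := hkm.compl)
        (hμs := measure_ne_top P _) (c := (1:ℝ)), h3.mem_iff, Lp.coeFn_add k g',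
        (Lp.coeFn_nonneg _).2 hkK.1, (Lp.coeFn_nonneg _).2 hg'K.1] with ω h4 h5 h6 h7 h8
    rw [h4]
    by_cases hω : 0 < k ω
    · simp [hω]
    · have h9 : ¬ 0 < (k + g' : Lp ℝ (ENNReal.ofReal q) P) ω := fun h => hω (h5.2 h)
      rw [h6, Pi.add_apply] at h9
      simp only [Pi.zero_apply] at h7 h8
      have : g' ω = 0 := by linarith
      simp [this]
  have hkint : Integrable k P := (Lp.memLp k).integrable Fact.out
  have hI : 0 < ∫ ω, k ω ∂P := by
    rw [integral_pos_iff_support_of_nonneg_ae (hkpos.mono fun _ h => h.le) hkint]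
    have : Function.support k =ᵐ[P] Set.univ := by
      filter_upwards [hkpos] with ω hω
      exact eq_true hω.ne'
    rw [measure_congr this]
    simp
  refine ⟨(∫ ω, k ω ∂P)⁻¹ • k, ?_, ?_, ?_⟩
  · filter_upwards [Lp.coeFn_smul (∫ ω, k ω ∂P)⁻¹ k, hkpos] with ω h1 h2
    rw [h1]
    exact mul_pos (inv_pos.2 hI) h2
  · rw [integral_congr_ae (Lp.coeFn_smul (∫ ω, k ω ∂P)⁻¹ k)]
    simp only [Pi.smul_apply, smul_eq_mul]
    rw [integral_const_mul, inv_mul_cancel₀ hI.ne']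
  · intro h hh
    rw [map_smul]
    exact mul_nonpos_of_nonneg_of_nonpos (inv_pos.2 hI).le (hkK.2 h hh)
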